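/- arXiv:2301.01401 — 4 statements merged into one kernel-verified Lean document; each statement's English description precedes it below -/
import Mathlib

section
/- Let m be a natural number and let (a_k), (b_k), (c_k), (d_k), (γ_k), (Δt_k), 0 ≤ k ≤ m+1, be nonnegative real numbers such that for all 0 ≤ k ≤ m one has a_{k+1} − a_k + b_{k+1}·Δt_{k+1} + c_{k+1}·Δt_{k+1} − c_k·Δt_k ≤ a_k·d_k·Δt_k + γ_{k+1}·Δt_{k+1}. Then a_{m+1} + Σ_{k=0}^{m+1} b_k·Δt_k ≤ exp(Σ_{k=0}^{m} d_k·Δt_k) · ( a_0 + (b_0 + c_0)·Δt_0 + Σ_{k=1}^{m+1} γ_k·Δt_k ). -/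
/-!
The energy `E n = a n + ∑ k ≤ n, b k * Δt k + c n * Δt n` dominates `a n`, so that bounding `a n` by
`E n` on the right-hand side of the recursion turns it into
`E (n + 1) ≤ (1 + d n * Δt n) * E n + γ (n + 1) * Δt (n + 1)`, to which the classical discrete
Grönwall inequality applies.
-/

open Finset

theorem discrete_gronwall_of_lt {u c b : ℕ → ℝ} {N : ℕ} (hu₀ : 0 ≤ u 0)
    (hu : ∀ n < N, u (n + 1) ≤ (1 + c n) * u n + b n) (hc : ∀ n < N, 0 ≤ c n)
    (hb : ∀ n < N, 0 ≤ b n) :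
    u N ≤ Real.exp (∑ k ∈ range N, c k) * (u 0 + ∑ k ∈ range N, b k) := by
  -- Freeze `u` from time `N` on, so that the recursion holds at all times.
  let u' : ℕ → ℝ := fun n ↦ u (min n N)
  let c' : ℕ → ℝ := fun n ↦ if n < N then c n else 0
  let b' : ℕ → ℝ := fun n ↦ if n < N then b n else 0
  have hu' : ∀ n ≥ 0, u' (n + 1) ≤ (1 + c' n) * u' n + b' n := by
    intro n _
    rcases lt_or_ge n N with hn | hn
    · simpa only [u', c', b', min_eq_left hn.le, min_eq_left (Nat.succ_le_of_lt hn), if_pos hn]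
        using hu n hn
    · simp only [u', c', b', min_eq_right hn, min_eq_right (hn.trans n.le_succ), if_neg hn.not_gt,
        add_zero, one_mul, le_refl]
  have hc' : ∀ n ≥ 0, 0 ≤ c' n := by grind
  have hb' : ∀ n ≥ 0, 0 ≤ b' n := by grind
  have sum_truncated (f : ℕ → ℝ) :
      ∑ k ∈ Ico 0 N, (if k < N then f k else 0) = ∑ k ∈ range N, f k := by
    rw [← range_eq_Ico]
    exact sum_congr rfl fun k hk ↦ if_pos (mem_range.mp hk)
  have hN := discrete_gronwall (u := u') (by simpa only [u', Nat.zero_min] using hu₀) hu' hc' hb'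
    N.zero_le
  simpa only [u', c', b', sum_truncated, min_self, Nat.zero_min, mul_comm] using hN

/-- The energy at time `n` of a quantity `a` with dissipation `b` and a non-accumulating term `c`.
The time steps are absorbed into `b` and `c`, which stand for `b k * Δt k` and `c k * Δt k`. -/
def discreteEnergy {M : Type*} [AddCommMonoid M] (a b c : ℕ → M) (n : ℕ) : M :=
  a n + ∑ k ∈ range (n + 1), b k + c n

theorem discreteEnergy_zero {M : Type*} [AddCommMonoid M] (a b c : ℕ → M) :
    discreteEnergy a b c 0 = a 0 + b 0 + c 0 := by
  simp only [discreteEnergy, zero_add, sum_range_one]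

theorem discreteEnergy_succ {M : Type*} [AddCommGroup M] (a b c : ℕ → M) (n : ℕ) :
    discreteEnergy a b c (n + 1) =
      discreteEnergy a b c n + (a (n + 1) - a n + b (n + 1) + c (n + 1) - c n) := by
  simp only [discreteEnergy, sum_range_succ _ (n + 1)]
  abel

theorem le_discreteEnergy {M : Type*} [AddCommMonoid M] [PartialOrder M] [IsOrderedAddMonoid M]
    {a b c : ℕ → M} {n : ℕ} (hb : ∀ k ≤ n, 0 ≤ b k) (hc : 0 ≤ c n) :
    a n ≤ discreteEnergy a b c n := by
  have sum_b_nonneg : 0 ≤ ∑ k ∈ range (n + 1), b k :=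
    sum_nonneg fun k hk ↦ hb k (mem_range_succ_iff.mp hk)
  rw [discreteEnergy, add_assoc]
  exact le_add_of_nonneg_right (add_nonneg sum_b_nonneg hc)

theorem discreteEnergy_succ_le {R : Type*} [CommRing R] [PartialOrder R] [IsOrderedRing R]
    {a b c : ℕ → R} {n : ℕ} {d g : R} (hb : ∀ k ≤ n, 0 ≤ b k) (hc : 0 ≤ c n) (hd : 0 ≤ d)
    (hrec : a (n + 1) - a n + b (n + 1) + c (n + 1) - c n ≤ a n * d + g) :
    discreteEnergy a b c (n + 1) ≤ (1 + d) * discreteEnergy a b c n + g :=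
  calc discreteEnergy a b c (n + 1)
    _ = discreteEnergy a b c n + (a (n + 1) - a n + b (n + 1) + c (n + 1) - c n) :=
      discreteEnergy_succ a b c n
    _ ≤ discreteEnergy a b c n + (a n * d + g) := by gcongr
    _ ≤ discreteEnergy a b c n + (discreteEnergy a b c n * d + g) := by
      gcongr
      exact le_discreteEnergy hb hc
    _ = (1 + d) * discreteEnergy a b c n + g := by ring

theorem discrete_gronwall_nonuniform_general
    {m : ℕ} {a b c d γ Δt : ℕ → ℝ} (ha₀ : 0 ≤ a 0) (hb : ∀ k ≤ m, 0 ≤ b k)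
    (hc : ∀ k ≤ m + 1, 0 ≤ c k) (hd : ∀ k ≤ m, 0 ≤ d k) (hγ : ∀ k ≤ m, 0 ≤ γ (k + 1))
    (hΔt : ∀ k ≤ m + 1, 0 ≤ Δt k)
    (hrec : ∀ k ≤ m,
      a (k + 1) - a k + b (k + 1) * Δt (k + 1) + c (k + 1) * Δt (k + 1) - c k * Δt k
        ≤ a k * d k * Δt k + γ (k + 1) * Δt (k + 1)) :
    a (m + 1) + ∑ k ∈ range (m + 2), b k * Δt k
      ≤ Real.exp (∑ k ∈ range (m + 1), d k * Δt k) *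
          (a 0 + (b 0 + c 0) * Δt 0 + ∑ k ∈ Icc 1 (m + 1), γ k * Δt k) := by
  let E := discreteEnergy a (fun k ↦ b k * Δt k) (fun k ↦ c k * Δt k)
  have hbΔt (k) (hk : k ≤ m) : 0 ≤ b k * Δt k := mul_nonneg (hb k hk) (hΔt k (by lia))
  have hcΔt (k) (hk : k ≤ m + 1) : 0 ≤ c k * Δt k := mul_nonneg (hc k hk) (hΔt k hk)
  have hdΔt (k) (hk : k < m + 1) : 0 ≤ d k * Δt k := mul_nonneg (hd k (by lia)) (hΔt k hk.le)
  have hγΔt (k) (hk : k < m + 1) : 0 ≤ γ (k + 1) * Δt (k + 1) :=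
    mul_nonneg (hγ k (by lia)) (hΔt (k + 1) hk)
  have E_zero : E 0 = a 0 + (b 0 + c 0) * Δt 0 := by
    rw [add_mul, ← add_assoc]
    exact discreteEnergy_zero _ _ _
  have E_zero_nonneg : 0 ≤ E 0 :=
    ha₀.trans (le_discreteEnergy (fun k hk ↦ hbΔt k (by lia)) (hcΔt 0 (by lia)))
  have E_succ_le (n) (hn : n < m + 1) :
      E (n + 1) ≤ (1 + d n * Δt n) * E n + γ (n + 1) * Δt (n + 1) :=
    discreteEnergy_succ_le (fun k hk ↦ hbΔt k (by lia)) (hcΔt n hn.le) (hdΔt n hn)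
      (by simpa only [mul_assoc] using hrec n (by lia))
  have sum_γ : ∑ k ∈ range (m + 1), γ (k + 1) * Δt (k + 1) = ∑ k ∈ Icc 1 (m + 1), γ k * Δt k := by
    rw [range_eq_Ico, sum_Ico_add' (fun k ↦ γ k * Δt k)]
    rfl
  calc a (m + 1) + ∑ k ∈ range (m + 2), b k * Δt k
    _ ≤ E (m + 1) := le_add_of_nonneg_right (hcΔt (m + 1) le_rfl)
    _ ≤ Real.exp (∑ k ∈ range (m + 1), d k * Δt k) *
          (E 0 + ∑ k ∈ range (m + 1), γ (k + 1) * Δt (k + 1)) :=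
      discrete_gronwall_of_lt E_zero_nonneg E_succ_le hdΔt hγΔt
    _ = Real.exp (∑ k ∈ range (m + 1), d k * Δt k) *
          (a 0 + (b 0 + c 0) * Δt 0 + ∑ k ∈ Icc 1 (m + 1), γ k * Δt k) := by rw [E_zero, sum_γ]

/-- Discrete Gronwall lemma with nonuniform time steps: if nonnegative sequences
`a, b, c, d, γ, Δt` satisfy
`a (k+1) - a k + b (k+1) * Δt (k+1) + c (k+1) * Δt (k+1) - c k * Δt k
  ≤ a k * d k * Δt k + γ (k+1) * Δt (k+1)` for all `k ≤ m`, then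
`a (m+1) + ∑_{k=0}^{m+1} b k * Δt k
  ≤ exp (∑_{k=0}^{m} d k * Δt k) * (a 0 + (b 0 + c 0) * Δt 0 + ∑_{k=1}^{m+1} γ k * Δt k)`. -/
theorem discrete_gronwall_nonuniform
    (m : ℕ) (a b c d γ Δt : ℕ → ℝ)
    (ha : ∀ k ≤ m + 1, 0 ≤ a k) (hb : ∀ k ≤ m + 1, 0 ≤ b k)
    (hc : ∀ k ≤ m + 1, 0 ≤ c k) (hd : ∀ k ≤ m + 1, 0 ≤ d k)
    (hγ : ∀ k ≤ m + 1, 0 ≤ γ k) (hΔt : ∀ k ≤ m + 1, 0 ≤ Δt k)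
    (hrec : ∀ k ≤ m,
      a (k + 1) - a k + b (k + 1) * Δt (k + 1) + c (k + 1) * Δt (k + 1) - c k * Δt k
        ≤ a k * d k * Δt k + γ (k + 1) * Δt (k + 1)) :
    a (m + 1) + ∑ k ∈ Finset.range (m + 2), b k * Δt k
      ≤ Real.exp (∑ k ∈ Finset.range (m + 1), d k * Δt k) *
          (a 0 + (b 0 + c 0) * Δt 0 + ∑ k ∈ Finset.Icc 1 (m + 1), γ k * Δt k) :=
  discrete_gronwall_nonuniform_general (ha 0 (by lia)) (fun k _ ↦ hb k (by lia)) hc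
    (fun k _ ↦ hd k (by lia)) (fun k _ ↦ hγ (k + 1) (by lia)) hΔt hrec
end

section
/- Let F : [0,∞) → (0,∞) be continuous and increasing, let M > 0, and let T* be a real number with 0 < T* < ∫_M^∞ dx / F(x) (the improper integral, possibly +∞). Then there exists a constant C* > 0, depending only on F, M and T* (in particular independent of Δt), with the following property: for every Δt > 0, every natural number n* with n*·Δt ≤ T*, and all nonnegative real sequences (x_n) and (ω_n) satisfying x_n + Σ_{k=0}^{n−1} Δt·ω_k ≤ M + Σ_{k=0}^{n−1} Δt·F(x_k) for every n ≤ n*, one has M + Σ_{k=0}^{n*−1} Δt·F(x_k) ≤ C*. -/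
/-!
The bound `y n = M + ∑_{k<n} Δt F (x k)` dominates `x n`, so by monotonicity it satisfies
`y (n + 1) ≤ y n + Δt F (y n)`: it grows no faster than the explicit Euler scheme for `y' = F y`.
Since `1 / F` is decreasing, each such step satisfies `∫_{y n}^{y (n+1)} dx / F x ≤ Δt`, and
summing gives `∫_M^{y n} dx / F x ≤ n Δt ≤ T*`. As `T* < ∫_M^∞ dx / F x`, already
`T* < ∫_M^C dx / F x` for some finite `C`, which `y` therefore cannot reach.
-/

open Filter MeasureTheory Set

open scoped ENNReal

theorem exists_gt_lt_setLIntegral_Ioc {α : Type*} [MeasurableSpace α] [LinearOrder α]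
    [(atTop : Filter α).IsCountablyGenerated] {μ : Measure α} {f : α → ℝ≥0∞} {a : α} {t : ℝ≥0∞}
    (h : t < ∫⁻ x in Ioi a, f x ∂μ) :
    ∃ b > a, t < ∫⁻ x in Ioc a b, f x ∂μ := by
  have : Nonempty α := ⟨a⟩
  obtain ⟨u, hu_mono, hu_tendsto⟩ := exists_seq_monotone_tendsto_atTop_atTop α
  have hIoi : ⋃ n, Ioc a (u n) = Ioi a :=
    iUnion_Ioc_eq_Ioi_self_iff.2 fun x _ => (hu_tendsto.eventually_ge_atTop x).exists
  have hdir : Directed (· ⊆ ·) fun n => Ioc a (u n) :=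
    Monotone.directed_le fun _ _ hmn => Ioc_subset_Ioc_right (hu_mono hmn)
  rw [← hIoi, setLIntegral_iUnion_of_directed f hdir, lt_iSup_iff] at h
  obtain ⟨n, hn⟩ := h
  refine ⟨u n, ?_, hn⟩
  by_contra! hle
  simp only [Ioc_eq_empty_of_le hle, Measure.restrict_empty, lintegral_zero_measure,
    not_lt_zero] at hn

theorem setLIntegral_Ioc_le_sum {α : Type*} [MeasurableSpace α] [LinearOrder α] (μ : Measure α)
    (f : α → ℝ≥0∞) (y : ℕ → α) (n : ℕ) :
    ∫⁻ x in Ioc (y 0) (y n), f x ∂μ ≤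
      ∑ k ∈ Finset.range n, ∫⁻ x in Ioc (y k) (y (k + 1)), f x ∂μ := by
  induction n with
  | zero => simp
  | succ n ih =>
    rw [Finset.sum_range_succ]
    calc ∫⁻ x in Ioc (y 0) (y (n + 1)), f x ∂μ
        ≤ ∫⁻ x in Ioc (y 0) (y n) ∪ Ioc (y n) (y (n + 1)), f x ∂μ :=
          lintegral_mono_set Ioc_subset_Ioc_union_Ioc
      _ ≤ ∫⁻ x in Ioc (y 0) (y n), f x ∂μ + ∫⁻ x in Ioc (y n) (y (n + 1)), f x ∂μ :=
          lintegral_union_le f _ _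
      _ ≤ _ := by gcongr

section EulerStep

variable {F : ℝ → ℝ}

theorem setLIntegral_one_div_Ioc_le_ofReal {y z τ : ℝ} (hF_mono : MonotoneOn F (Ici y))
    (hF_pos : 0 < F y) (hz : z ≤ y + τ * F y) :
    ∫⁻ x in Ioc y z, ENNReal.ofReal (1 / F x) ≤ ENNReal.ofReal τ := by
  have h_anti : ∀ x ∈ Ioc y z, ENNReal.ofReal (1 / F x) ≤ ENNReal.ofReal (1 / F y) :=
    fun x hx => ENNReal.ofReal_le_ofReal <|
      one_div_le_one_div_of_le hF_pos (hF_mono self_mem_Ici hx.1.le hx.1.le)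
  calc ∫⁻ x in Ioc y z, ENNReal.ofReal (1 / F x)
      ≤ ∫⁻ _ in Ioc y z, ENNReal.ofReal (1 / F y) := setLIntegral_mono' measurableSet_Ioc h_anti
    _ = ENNReal.ofReal (1 / F y * (z - y)) := by
        rw [setLIntegral_const, Real.volume_Ioc, ENNReal.ofReal_mul (by positivity)]
    _ ≤ ENNReal.ofReal τ := by
        apply ENNReal.ofReal_le_ofReal
        rw [one_div_mul_eq_div, div_le_iff₀ hF_pos]
        linarith

theorem setLIntegral_one_div_Ioc_le_ofReal_sum {M : ℝ} {y τ : ℕ → ℝ} {N : ℕ}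
    (hF_mono : MonotoneOn F (Ici M)) (hF_pos : 0 < F M) (hτ : ∀ n < N, 0 ≤ τ n)
    (hy : ∀ n < N, M ≤ y n) (hstep : ∀ n < N, y (n + 1) ≤ y n + τ n * F (y n)) :
    ∫⁻ x in Ioc (y 0) (y N), ENNReal.ofReal (1 / F x) ≤
      ENNReal.ofReal (∑ n ∈ Finset.range N, τ n) := by
  rw [ENNReal.ofReal_sum_of_nonneg fun n hn => hτ n (Finset.mem_range.1 hn)]
  refine (setLIntegral_Ioc_le_sum volume _ y N).trans (Finset.sum_le_sum fun n hn => ?_)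
  have hMy : M ≤ y n := hy n (Finset.mem_range.1 hn)
  exact setLIntegral_one_div_Ioc_le_ofReal (hF_mono.mono (Ici_subset_Ici.2 hMy))
    (hF_pos.trans_le (hF_mono self_mem_Ici hMy hMy)) (hstep n (Finset.mem_range.1 hn))

end EulerStep

theorem nonlinear_discrete_gronwall_local_general {F : ℝ → ℝ} {a M T : ℝ} (haM : a ≤ M)
    (hF_mono : MonotoneOn F (Ici a)) (hF_pos : 0 < F M)
    (hT : ENNReal.ofReal T < ∫⁻ x in Ioi M, ENNReal.ofReal (1 / F x)) :
    ∃ C > M, ∀ (τ : ℕ → ℝ) (N : ℕ) (x : ℕ → ℝ),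
      (∀ n < N, 0 ≤ τ n) → ∑ n ∈ Finset.range N, τ n ≤ T →
      (∀ n < N, a ≤ x n) →
      (∀ n < N, x n ≤ M + ∑ k ∈ Finset.range n, τ k * F (x k)) →
      M + ∑ k ∈ Finset.range N, τ k * F (x k) ≤ C := by
  obtain ⟨C, hMC, hC⟩ := exists_gt_lt_setLIntegral_Ioc hT
  refine ⟨C, hMC, fun τ N x hτ hτT hx hle => ?_⟩
  -- `F` may be negative below `M`, so the bound can drop below `M`; truncating keeps `0 < F (y n)`.
  let y : ℕ → ℝ := fun n => max M (M + ∑ k ∈ Finset.range n, τ k * F (x k))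
  have hM_le (n : ℕ) : M ≤ y n := le_max_left _ _
  have hF_mono_M : MonotoneOn F (Ici M) := hF_mono.mono (Ici_subset_Ici.2 haM)
  have hstep : ∀ n < N, y (n + 1) ≤ y n + τ n * F (y n) := fun n hn => by
    have hxy : x n ≤ y n := (hle n hn).trans (le_max_right _ _)
    have hF_xy : τ n * F (x n) ≤ τ n * F (y n) :=
      mul_le_mul_of_nonneg_left (hF_mono (hx n hn) (haM.trans (hM_le n)) hxy) (hτ n hn)
    have hF_y : 0 ≤ τ n * F (y n) :=
      mul_nonneg (hτ n hn) (hF_pos.le.trans (hF_mono_M self_mem_Ici (hM_le n) (hM_le n)))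
    refine max_le (le_add_of_le_of_nonneg (hM_le n) hF_y) ?_
    rw [Finset.sum_range_succ, ← add_assoc]
    exact add_le_add (le_max_right _ _) hF_xy
  have htime : ∫⁻ x in Ioc M (y N), ENNReal.ofReal (1 / F x) ≤ ENNReal.ofReal T := by
    have h := setLIntegral_one_div_Ioc_le_ofReal_sum hF_mono_M hF_pos hτ (fun n _ => hM_le n) hstep
    rw [show y 0 = M by simp [y]] at h
    exact h.trans (ENNReal.ofReal_le_ofReal hτT)
  refine (le_max_right _ _).trans (le_of_not_gt fun hCy : C < y N => hC.not_ge ?_)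
  exact (lintegral_mono_set (Ioc_subset_Ioc_right hCy.le)).trans htime

/-- Nonlinear discrete Gronwall-type lemma (local in time): if `F` is continuous,
increasing and positive on `[0, ∞)`, `M > 0` and `0 < T* < ∫_M^∞ dx / F(x)`
(improper integral, possibly `+∞`), then there is a constant `C*` independent of
`Δt` such that for every `Δt > 0` and `n*` with `n* Δt ≤ T*`, any nonnegative
sequences `x, ω` satisfying
`x n + ∑_{k<n} Δt ω k ≤ M + ∑_{k<n} Δt F (x k)` for all `n ≤ n*`
obey `M + ∑_{k < n*} Δt F (x k) ≤ C*`. -/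
theorem nonlinear_discrete_gronwall_local
    (F : ℝ → ℝ) (M Tstar : ℝ)
    (hF_pos : ∀ x, 0 ≤ x → 0 < F x)
    (hF_cont : ContinuousOn F (Set.Ici 0))
    (hF_mono : MonotoneOn F (Set.Ici 0))
    (hM : 0 < M) (hT_pos : 0 < Tstar)
    (hT : ENNReal.ofReal Tstar < ∫⁻ x in Set.Ioi M, ENNReal.ofReal (1 / F x)) :
    ∃ Cstar > 0, ∀ (Δt : ℝ) (nstar : ℕ) (x ω : ℕ → ℝ),
      0 < Δt → (nstar : ℝ) * Δt ≤ Tstar →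
      (∀ n, 0 ≤ x n) → (∀ n, 0 ≤ ω n) →
      (∀ n ≤ nstar, x n + ∑ k ∈ Finset.range n, Δt * ω k
          ≤ M + ∑ k ∈ Finset.range n, Δt * F (x k)) →
      M + ∑ k ∈ Finset.range nstar, Δt * F (x k) ≤ Cstar := by
  obtain ⟨C, hMC, hC⟩ :=
    nonlinear_discrete_gronwall_local_general hM.le hF_mono (hF_pos M hM.le) hT
  refine ⟨C, hM.trans hMC, fun Δt N x ω hΔt hN hx hω hle => ?_⟩
  refine hC (fun _ => Δt) N x (fun _ _ => hΔt.le) (by simpa using hN) (fun n _ => hx n) ?_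
  intro n hn
  have hω_sum : 0 ≤ ∑ k ∈ Finset.range n, Δt * ω k :=
    Finset.sum_nonneg fun k _ => mul_nonneg hΔt.le (hω k)
  exact (le_add_of_nonneg_right hω_sum).trans (hle n hn.le)
end

section
/- Let M > 0 and let T* be a real number with 0 < T* < 1/(5 M^5) (note that ∫_M^∞ dx/x^6 = 1/(5 M^5)). Then there exists a constant C* > 0, depending only on M and T* and independent of Δt, with the following property: for every Δt > 0, every natural number n* with n*·Δt ≤ T*, and all nonnegative real sequences (x_n) and (ω_n) satisfying x_n + Σ_{k=0}^{n−1} Δt·ω_k ≤ M + Σ_{k=0}^{n−1} Δt·x_k^6 for every n ≤ n*, one has M + Σ_{k=0}^{n*−1} Δt·x_k^6 ≤ C*, and in particular x_n ≤ C* for all n ≤ n*. -/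
/-!
With `S n = M + ∑_{k<n} Δt F(x k)`, the hypothesis gives `x n ≤ S n`, hence
`S (n + 1) ≤ S n + Δt F(S n)` for nondecreasing `F`: the sequence `S` is dominated by the explicit
Euler scheme for `y' = F(y)`. As `1 / F` is nonincreasing, each step adds at most `Δt` to
`∫_M^{S n} 1 / F`, so `S` cannot reach a point `C` with `n Δt < ∫_M^C 1 / F`. For `F(x) = x ^ 6`
such a `C` exists because `Tstar` is smaller than the limit `1 / (5 M ^ 5)` of these integrals.
-/

open Set Filter Topology

section IntegralInv

variable {F : ℝ → ℝ} {a b c : ℝ}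

lemma antitoneOn_inv_of_monotoneOn (hF : MonotoneOn F (Ici a)) (ha : 0 < F a) :
    AntitoneOn (fun x ↦ (F x)⁻¹) (Ici a) := fun _ hx _ hy hxy ↦
  inv_anti₀ (ha.trans_le (hF self_mem_Ici hx hx)) (hF hx hy hxy)

lemma intervalIntegrable_inv_of_monotoneOn (hF : MonotoneOn F (Ici a)) (ha : 0 < F a)
    (hb : a ≤ b) (hc : a ≤ c) :
    IntervalIntegrable (fun x ↦ (F x)⁻¹) MeasureTheory.volume b c :=
  ((antitoneOn_inv_of_monotoneOn hF ha).mono fun _ hx ↦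
    (le_inf hb hc).trans hx.1).intervalIntegrable

lemma integral_inv_le_of_le_add_mul (hF : MonotoneOn F (Ici a)) (ha : 0 < F a) (hab : a ≤ b)
    {τ : ℝ} (hb : b ≤ a + τ * F a) : ∫ x in a..b, (F x)⁻¹ ≤ τ := by
  calc ∫ x in a..b, (F x)⁻¹
      ≤ ∫ _ in a..b, (F a)⁻¹ :=
        intervalIntegral.integral_mono_on hab
          (intervalIntegrable_inv_of_monotoneOn hF ha le_rfl hab) intervalIntegrable_const
          fun _ hx ↦ antitoneOn_inv_of_monotoneOn hF ha self_mem_Ici hx.1 hx.1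
    _ = (b - a) / F a := by rw [intervalIntegral.integral_const, smul_eq_mul, div_eq_mul_inv]
    _ ≤ τ := by rw [div_le_iff₀ ha]; linarith

lemma lt_of_integral_inv_lt_integral_inv (hF : MonotoneOn F (Ici a)) (ha : 0 < F a)
    (hac : a ≤ c) (h : ∫ x in a..b, (F x)⁻¹ < ∫ x in a..c, (F x)⁻¹) : b < c := by
  contrapose! h with hcb
  have hab : a ≤ b := hac.trans hcb
  refine intervalIntegral.integral_mono_interval le_rfl hac hcb ?_
    (intervalIntegrable_inv_of_monotoneOn hF ha le_rfl hab)
  filter_upwards [MeasureTheory.ae_restrict_mem measurableSet_Ioc] with x hx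
  exact inv_nonneg.2 (ha.le.trans (hF self_mem_Ici hx.1.le hx.1.le))

lemma integral_inv_le_sum_of_le_add_mul {S τ : ℕ → ℝ} {N : ℕ} (hF : MonotoneOn F (Ici (S 0)))
    (h0 : 0 < F (S 0)) (hS : Monotone S) (hstep : ∀ n < N, S (n + 1) ≤ S n + τ n * F (S n)) :
    ∫ x in S 0..S N, (F x)⁻¹ ≤ ∑ n ∈ Finset.range N, τ n := by
  have hS0 (n : ℕ) : S 0 ≤ S n := hS n.zero_le
  rw [← intervalIntegral.sum_integral_adjacent_intervals fun n _ ↦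
    intervalIntegrable_inv_of_monotoneOn hF h0 (hS0 n) (hS0 (n + 1))]
  refine Finset.sum_le_sum fun n hn ↦ ?_
  exact integral_inv_le_of_le_add_mul (hF.mono (Ici_subset_Ici.2 (hS0 n)))
    (h0.trans_le (hF self_mem_Ici (hS0 n) (hS0 n))) (hS n.le_succ)
    (hstep n (Finset.mem_range.1 hn))

end IntegralInv

/-- Bounding `∑ τ k` by the integral up to a finite `C`, rather than up to `∞`, also covers `F` for
which `∫_M^∞ 1 / F` diverges. -/
theorem nonlinear_discrete_gronwall {F : ℝ → ℝ} {M C : ℝ} {τ x ω : ℕ → ℝ} {N : ℕ}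
    (hF : MonotoneOn F (Ici 0)) (hF0 : 0 ≤ F 0) (hM : 0 ≤ M) (hFM : 0 < F M) (hMC : M ≤ C)
    (hτ : ∀ n, 0 ≤ τ n) (hx : ∀ n, 0 ≤ x n) (hω : ∀ n, 0 ≤ ω n)
    (hτC : ∑ k ∈ Finset.range N, τ k < ∫ y in M..C, (F y)⁻¹)
    (h : ∀ n ≤ N, x n + ∑ k ∈ Finset.range n, τ k * ω k
      ≤ M + ∑ k ∈ Finset.range n, τ k * F (x k)) :
    M + ∑ k ∈ Finset.range N, τ k * F (x k) < C ∧ ∀ n ≤ N, x n < C := by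
  set S : ℕ → ℝ := fun n ↦ M + ∑ k ∈ Finset.range n, τ k * F (x k) with hS
  have hS_zero : S 0 = M := by simp [hS]
  have hS_succ (n : ℕ) : S (n + 1) = S n + τ n * F (x n) := by
    simp only [hS, Finset.sum_range_succ, add_assoc]
  have hS_mono : Monotone S := monotone_nat_of_le_succ fun n ↦ by
    rw [hS_succ]
    exact le_add_of_nonneg_right
      (mul_nonneg (hτ n) (hF0.trans (hF self_mem_Ici (hx n) (hx n))))
  have hxS (n : ℕ) (hn : n ≤ N) : x n ≤ S n :=
    (le_add_of_nonneg_right (Finset.sum_nonneg fun k _ ↦ mul_nonneg (hτ k) (hω k))).trans (h n hn)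
  have hstep (n : ℕ) (hn : n < N) : S (n + 1) ≤ S n + τ n * F (S n) := by
    have hFx : F (x n) ≤ F (S n) := hF (hx n) ((hx n).trans (hxS n hn.le)) (hxS n hn.le)
    rw [hS_succ]
    gcongr
    exact hτ n
  have hFM_mono : MonotoneOn F (Ici M) := hF.mono (Ici_subset_Ici.2 hM)
  have hSC : S N < C := by
    refine lt_of_integral_inv_lt_integral_inv hFM_mono hFM hMC (lt_of_le_of_lt ?_ hτC)
    rw [← hS_zero] at hFM_mono hFM ⊢
    exact integral_inv_le_sum_of_le_add_mul hFM_mono hFM hS_mono hstep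
  exact ⟨hSC, fun n hn ↦ ((hxS n hn).trans (hS_mono hn)).trans_lt hSC⟩

lemma integral_inv_pow_succ {a b : ℝ} (ha : 0 < a) (hb : 0 < b) {p : ℕ} (hp : p ≠ 0) :
    ∫ x in a..b, (x ^ (p + 1))⁻¹ = ((a ^ p)⁻¹ - (b ^ p)⁻¹) / p := by
  have hexp : -((p + 1 : ℕ) : ℤ) + 1 = -(p : ℤ) := by push_cast; ring
  calc ∫ x in a..b, (x ^ (p + 1))⁻¹
      = ∫ x in a..b, x ^ (-((p + 1 : ℕ) : ℤ)) := by simp only [zpow_neg, zpow_natCast]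
    _ = ((a ^ p)⁻¹ - (b ^ p)⁻¹) / p := by
      rw [integral_zpow (Or.inr ⟨by omega, notMem_uIcc_of_lt ha hb⟩), hexp]
      simp only [zpow_neg, zpow_natCast]
      push_cast
      rw [neg_add_rev, neg_add_cancel_comm, div_neg, ← neg_div, neg_sub]

lemma exists_lt_integral_inv_pow_succ {M T : ℝ} (hM : 0 < M) {p : ℕ} (hp : p ≠ 0)
    (hT : T < 1 / (p * M ^ p)) : ∃ C ≥ M, T < ∫ x in M..C, (x ^ (p + 1))⁻¹ := by
  have hlim : Tendsto (fun C : ℝ ↦ ((M ^ p)⁻¹ - (C ^ p)⁻¹) / p) atTop (𝓝 (1 / (p * M ^ p))) := by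
    have hlimit : 1 / (p * M ^ p) = ((M ^ p)⁻¹ - 0) / p := by
      rw [sub_zero, one_div, mul_inv_rev, div_eq_mul_inv]
    rw [hlimit]
    exact ((tendsto_pow_atTop hp).inv_tendsto_atTop.const_sub _).div_const _
  obtain ⟨C, hTC, hMC⟩ := ((hlim.eventually_const_lt hT).and (eventually_ge_atTop M)).exists
  exact ⟨C, hMC, by rwa [integral_inv_pow_succ hM (hM.trans_le hMC) hp]⟩

/-- The instance `F x = x^6` of the nonlinear discrete Gronwall lemma: if `M > 0` and
`0 < T* < 1/(5 M^5) = ∫_M^∞ dx/x^6`, then there is a constant `C*` independent of `Δt`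
such that for every `Δt > 0` and `n*` with `n* Δt ≤ T*`, any nonnegative sequences
`x, ω` satisfying `x n + ∑_{k<n} Δt ω k ≤ M + ∑_{k<n} Δt (x k)^6` for all `n ≤ n*`
obey `M + ∑_{k < n*} Δt (x k)^6 ≤ C*`, and in particular `x n ≤ C*` for all `n ≤ n*`. -/
theorem nonlinear_discrete_gronwall_pow_six
    (M Tstar : ℝ) (hM : 0 < M) (hT_pos : 0 < Tstar)
    (hT : Tstar < 1 / (5 * M ^ 5)) :
    ∃ Cstar > 0, ∀ (Δt : ℝ) (nstar : ℕ) (x ω : ℕ → ℝ),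
      0 < Δt → (nstar : ℝ) * Δt ≤ Tstar →
      (∀ n, 0 ≤ x n) → (∀ n, 0 ≤ ω n) →
      (∀ n ≤ nstar, x n + ∑ k ∈ Finset.range n, Δt * ω k
          ≤ M + ∑ k ∈ Finset.range n, Δt * x k ^ 6) →
      (M + ∑ k ∈ Finset.range nstar, Δt * x k ^ 6 ≤ Cstar) ∧
        ∀ n ≤ nstar, x n ≤ Cstar := by
  obtain ⟨C, hMC, hTC⟩ :=
    exists_lt_integral_inv_pow_succ hM (p := 5) (by norm_num) (by exact_mod_cast hT)
  refine ⟨C, hM.trans_le hMC, fun Δt nstar x ω hΔt hn hx hω h ↦ ?_⟩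
  have hsteps : ∑ _k ∈ Finset.range nstar, Δt < ∫ y in M..C, (y ^ 6)⁻¹ := by
    rw [Finset.sum_const, Finset.card_range, nsmul_eq_mul]
    exact hn.trans_lt hTC
  have hpow : MonotoneOn (fun y : ℝ ↦ y ^ 6) (Ici 0) := fun _ hy _ _ hyz ↦
    pow_le_pow_left₀ hy hyz 6
  obtain ⟨hsum, hxC⟩ := nonlinear_discrete_gronwall hpow (by positivity) hM.le (pow_pos hM 6) hMC
    (fun _ ↦ hΔt.le) hx hω hsteps h
  exact ⟨hsum.le, fun n hn ↦ (hxC n hn).le⟩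
end

section
/- Let H be a real Hilbert space, let a < b be real numbers with Δt = b − a, and let u : ℝ → H be twice continuously differentiable on an open interval containing [a, b]. Then the truncation error S := u'(b) − (u(b) − u(a))/(b − a) satisfies ‖S‖² ≤ (Δt/3) ∫_a^b ‖u''(t)‖² dt. -/
/-! With `F t = (t - a) • u' t - u t` we have `F' t = (t - a) • u'' t`, and `F b - F a` is `(b - a)`
times the truncation error. Hence its norm is at most `∫ (t - a) ‖u'' t‖`, and Cauchy–Schwarz
together with `∫ (t - a)² = (b - a)³ / 3` gives the constant. -/

open MeasureTheory Set

section CauchySchwarz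

variable {α : Type*} [MeasurableSpace α] {μ : Measure α}

lemma sq_integral_mul_le {f g : α → ℝ} (hf : MemLp f 2 μ) (hg : MemLp g 2 μ) :
    (∫ x, f x * g x ∂μ) ^ 2 ≤ (∫ x, f x ^ 2 ∂μ) * ∫ x, g x ^ 2 ∂μ := by
  have inner_toLp : ∀ {f g : α → ℝ} (hf : MemLp f 2 μ) (hg : MemLp g 2 μ),
      inner ℝ (hg.toLp g) (hf.toLp f) = ∫ x, f x * g x ∂μ := by
    intro f g hf hg
    rw [L2.inner_def]
    refine integral_congr_ae ?_
    filter_upwards [hf.coeFn_toLp, hg.coeFn_toLp] with x hfx hgx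
    rw [hfx, hgx, RCLike.inner_apply, conj_trivial]
  have h := real_inner_mul_inner_self_le (hg.toLp g) (hf.toLp f)
  simp only [inner_toLp, ← sq] at h
  rwa [mul_comm] at h

lemma memLp_two_norm_of_integrable_sq_norm {E : Type*} [NormedAddCommGroup E] {f : α → E}
    (hf : Integrable (fun x => ‖f x‖ ^ 2) μ) : MemLp (fun x => ‖f x‖) 2 μ := by
  have hmeas : AEStronglyMeasurable (fun x => ‖f x‖) μ := by
    simpa only [Real.sqrt_sq (norm_nonneg _)] using
      Real.continuous_sqrt.comp_aestronglyMeasurable hf.aestronglyMeasurable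
  exact (memLp_two_iff_integrable_sq hmeas).2 hf

end CauchySchwarz

lemma integral_sub_left_endpoint_sq (a b : ℝ) : ∫ t in a..b, (t - a) ^ 2 = (b - a) ^ 3 / 3 := by
  rw [intervalIntegral.integral_comp_sub_right (fun t => t ^ 2) a, integral_pow]
  norm_num

section Truncation

variable {E : Type*} [NormedAddCommGroup E] [NormedSpace ℝ E] {u u' u'' : ℝ → E} {a b : ℝ}

lemma hasDerivAt_sub_smul_deriv_sub {t : ℝ} (hu : HasDerivAt u (u' t) t)
    (hu' : HasDerivAt u' (u'' t) t) :
    HasDerivAt (fun τ => (τ - a) • u' τ - u τ) ((t - a) • u'' t) t :=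
  ((((hasDerivAt_id t).sub_const a).smul hu').sub hu).congr_deriv (by simp)

lemma norm_sub_smul_deriv_sub_le_integral (hab : a ≤ b)
    (huc : ContinuousOn u (Icc a b)) (huc' : ContinuousOn u' (Icc a b))
    (hu : ∀ t ∈ Ioo a b, HasDerivAt u (u' t) t) (hu' : ∀ t ∈ Ioo a b, HasDerivAt u' (u'' t) t)
    (hint : IntervalIntegrable (fun t => (t - a) * ‖u'' t‖) volume a b) :
    ‖(b - a) • u' b - (u b - u a)‖ ≤ ∫ t in a..b, (t - a) * ‖u'' t‖ := by
  have hF : ∀ t ∈ Ioo a b, HasDerivAt (fun τ => (τ - a) • u' τ - u τ) ((t - a) • u'' t) t :=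
    fun t ht => hasDerivAt_sub_smul_deriv_sub (hu t ht) (hu' t ht)
  have hspeed : ∀ t ∈ Ioo a b, ‖deriv (fun τ => (τ - a) • u' τ - u τ) t‖ ≤ (t - a) * ‖u'' t‖ := by
    intro t ht
    rw [(hF t ht).deriv, norm_smul, Real.norm_of_nonneg (sub_nonneg.2 ht.1.le)]
  have h := norm_sub_le_integral_of_norm_deriv_le_of_le hab (by fun_prop)
    (fun t ht => (hF t ht).differentiableAt.differentiableWithinAt) (.of_forall hspeed) hint
  rwa [sub_self, zero_smul, zero_sub, sub_neg_eq_add, sub_add] at h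

lemma sq_norm_sub_smul_deriv_sub_le (hab : a ≤ b)
    (huc : ContinuousOn u (Icc a b)) (huc' : ContinuousOn u' (Icc a b))
    (hu : ∀ t ∈ Ioo a b, HasDerivAt u (u' t) t) (hu' : ∀ t ∈ Ioo a b, HasDerivAt u' (u'' t) t)
    (hint : IntervalIntegrable (fun t => ‖u'' t‖ ^ 2) volume a b) :
    ‖(b - a) • u' b - (u b - u a)‖ ^ 2 ≤ (b - a) ^ 3 / 3 * ∫ t in a..b, ‖u'' t‖ ^ 2 := by
  have hweight : MemLp (fun t => t - a) 2 (volume.restrict (Ioc a b)) :=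
    (memLp_two_iff_integrable_sq (by fun_prop)).2
      ((by fun_prop : Continuous fun t => (t - a) ^ 2).intervalIntegrable a b).1
  have hnorm : MemLp (fun t => ‖u'' t‖) 2 (volume.restrict (Ioc a b)) :=
    memLp_two_norm_of_integrable_sq_norm hint.1
  have hprod : IntervalIntegrable (fun t => (t - a) * ‖u'' t‖) volume a b :=
    (intervalIntegrable_iff_integrableOn_Ioc_of_le hab).2 (hweight.integrable_mul hnorm)
  calc ‖(b - a) • u' b - (u b - u a)‖ ^ 2
      ≤ (∫ t in a..b, (t - a) * ‖u'' t‖) ^ 2 := by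
        gcongr
        exact norm_sub_smul_deriv_sub_le_integral hab huc huc' hu hu' hprod
    _ ≤ (∫ t in a..b, (t - a) ^ 2) * ∫ t in a..b, ‖u'' t‖ ^ 2 := by
        simpa only [intervalIntegral.integral_of_le hab] using sq_integral_mul_le hweight hnorm
    _ = (b - a) ^ 3 / 3 * ∫ t in a..b, ‖u'' t‖ ^ 2 := by
        rw [integral_sub_left_endpoint_sq]

theorem truncation_error_sq_bound_general (hab : a < b)
    (huc : ContinuousOn u (Icc a b)) (huc' : ContinuousOn u' (Icc a b))
    (hu : ∀ t ∈ Ioo a b, HasDerivAt u (u' t) t) (hu' : ∀ t ∈ Ioo a b, HasDerivAt u' (u'' t) t)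
    (hint : IntervalIntegrable (fun t => ‖u'' t‖ ^ 2) volume a b) :
    ‖u' b - (b - a)⁻¹ • (u b - u a)‖ ^ 2 ≤ (b - a) / 3 * ∫ t in a..b, ‖u'' t‖ ^ 2 := by
  have hpos : 0 < b - a := sub_pos.2 hab
  have hscale : (b - a) • (u' b - (b - a)⁻¹ • (u b - u a)) = (b - a) • u' b - (u b - u a) := by
    rw [smul_sub, smul_inv_smul₀ hpos.ne']
  have hbound := sq_norm_sub_smul_deriv_sub_le hab.le huc huc' hu hu' hint
  rw [← hscale, norm_smul, Real.norm_of_nonneg hpos.le, mul_pow] at hbound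
  refine le_of_mul_le_mul_left (hbound.trans_eq ?_) (pow_pos hpos 2)
  ring

end Truncation

/-- Bound for the first-order backward-difference truncation error
`S = u'(b) - (u(b) - u(a))/(b - a)` of a Hilbert-space-valued function `u` that is
`C²` on an open set containing `[a, b]`, with `Δt = b - a`:
`‖S‖² ≤ (Δt/3) ∫_a^b ‖u''(t)‖² dt`. -/
theorem truncation_error_sq_bound
    {H : Type*} [NormedAddCommGroup H] [InnerProductSpace ℝ H] [CompleteSpace H]
    (u : ℝ → H) (a b : ℝ) (hab : a < b)
    (s : Set ℝ) (hs : IsOpen s) (hsub : Set.Icc a b ⊆ s)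
    (hu : ContDiffOn ℝ 2 u s) :
    ‖deriv u b - (b - a)⁻¹ • (u b - u a)‖ ^ 2
      ≤ ((b - a) / 3) * ∫ t in a..b, ‖deriv (deriv u) t‖ ^ 2 := by
  have hu' : ContDiffOn ℝ 1 (deriv u) s := hu.deriv_of_isOpen hs (by norm_num)
  have hu'' : ContinuousOn (deriv (deriv u)) (Icc a b) :=
    (hu'.continuousOn_deriv_of_isOpen hs le_rfl).mono hsub
  have hnhds : ∀ t ∈ Ioo a b, s ∈ nhds t := fun t ht => hs.mem_nhds (hsub (Ioo_subset_Icc_self ht))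
  exact truncation_error_sq_bound_general hab
    (hu.continuousOn.mono hsub) (hu'.continuousOn.mono hsub)
    (fun t ht => (hu.differentiableOn two_ne_zero).hasDerivAt (hnhds t ht))
    (fun t ht => (hu'.differentiableOn one_ne_zero).hasDerivAt (hnhds t ht))
    ((hu''.norm.pow 2).intervalIntegrable_of_Icc hab.le)
end
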